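/- Let D′ ⋐ D ⊂ ℝ^{2n+1} be bounded open sets, let s ≥ 2n + 3 and 0 ≤ k ≤ s be integers. Then there exists a constant C > 0 such that for all smooth functions f, g : cl(D) → ℝ one has ‖f·g‖_{D′,k} ≤ C ‖f‖_{D,s} ‖g‖_{D,k}. -/

import Mathlib

open MeasureTheory Bornology

noncomputable section

variable {E : Type*} [NormedAddCommGroup E] [NormedSpace ℝ E]

/-- The standard contact form `η₀ = dx^{2n+1} - Σ x^{n+j} dx^j` on `ℝ^{2n+1}`
(0-indexed coordinates): `η₀(x)(v) = v_{2n} - Σ_{j<n} x_{n+j} v_j`. -/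
def eta0 (n : ℕ) (x v : Fin (2*n+1) → ℝ) : ℝ :=
  v ⟨2*n, by omega⟩ -
    ∑ j : Fin n, x ⟨n + j, by have := j.2; omega⟩ * v ⟨j, by have := j.2; omega⟩

/-- `dη₀ = Σ_{j<n} dx^j ∧ dx^{n+j}`. -/
def dEta0 (n : ℕ) (u v : Fin (2*n+1) → ℝ) : ℝ :=
  ∑ j : Fin n,
    (u ⟨j, by have := j.2; omega⟩ * v ⟨n + j, by have := j.2; omega⟩ -
     u ⟨n + j, by have := j.2; omega⟩ * v ⟨j, by have := j.2; omega⟩)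

/-- The horizontal vector fields: for `j < n`, `X_j = ∂_j + x_{n+j} ∂_{2n}`;
for `n ≤ j < 2n`, `X_j = ∂_j` (0-indexed). -/
def Xvec (n : ℕ) (j : Fin (2*n)) (x : Fin (2*n+1) → ℝ) : Fin (2*n+1) → ℝ :=
  if h : (j : ℕ) < n then
    (Pi.single (⟨j, by omega⟩ : Fin (2*n+1)) 1 : Fin (2*n+1) → ℝ)
      + x ⟨n + j, by omega⟩ • (Pi.single (⟨2*n, by omega⟩ : Fin (2*n+1)) 1 : Fin (2*n+1) → ℝ)
  else
    (Pi.single (⟨j, by have := j.2; omega⟩ : Fin (2*n+1)) 1 : Fin (2*n+1) → ℝ)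

/-- The horizontal derivative `X_j f`. -/
def hDeriv (n : ℕ) (j : Fin (2*n)) (f : (Fin (2*n+1) → ℝ) → E)
    (x : Fin (2*n+1) → ℝ) : E :=
  fderiv ℝ f x (Xvec n j x)

/-- Iterated horizontal derivative `X_I f = X_{i₁} ⋯ X_{i_t} f`. -/
def XI (n : ℕ) : List (Fin (2*n)) → ((Fin (2*n+1) → ℝ) → E) → ((Fin (2*n+1) → ℝ) → E)
  | [], f => f
  | j :: I, f => hDeriv n j (XI n I f)

/-- Squared Folland–Stein norm `‖f‖_{D,s}² = Σ_{|I| ≤ s} ∫_D ‖X_I f‖²`. -/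
def fsNormSq (n : ℕ) (D : Set (Fin (2*n+1) → ℝ)) (s : ℕ)
    (f : (Fin (2*n+1) → ℝ) → E) : ℝ :=
  ∑ t ∈ Finset.range (s+1), ∑ I : Fin t → Fin (2*n),
    ∫ x in D, ‖XI n (List.ofFn I) f x‖^2

/-- The Folland–Stein norm `‖f‖_{D,s}`. -/
def fsNorm (n : ℕ) (D : Set (Fin (2*n+1) → ℝ)) (s : ℕ)
    (f : (Fin (2*n+1) → ℝ) → E) : ℝ :=
  Real.sqrt (fsNormSq n D s f)

/-- Ordinary partial derivative `∂_i f`. -/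
def pDeriv (n : ℕ) (i : Fin (2*n+1)) (f : (Fin (2*n+1) → ℝ) → E)
    (x : Fin (2*n+1) → ℝ) : E :=
  fderiv ℝ f x (Pi.single i 1 : Fin (2*n+1) → ℝ)

/-- Iterated ordinary partial derivative. -/
def pI (n : ℕ) : List (Fin (2*n+1)) → ((Fin (2*n+1) → ℝ) → E) → ((Fin (2*n+1) → ℝ) → E)
  | [], f => f
  | i :: I, f => pDeriv n i (pI n I f)

/-- The Reeb derivative `T₀ f = ∂_{2n} f` (0-indexed). -/
def T0Deriv (n : ℕ) (f : (Fin (2*n+1) → ℝ) → E) (x : Fin (2*n+1) → ℝ) : E :=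
  fderiv ℝ f x (Pi.single (⟨2*n, by omega⟩ : Fin (2*n+1)) 1 : Fin (2*n+1) → ℝ)

/-- `X` is a contact vector field on `D`:  `dη₀(X, X_j) + X_j(η₀(X)) = 0` for all
horizontal `X_j`. -/
def IsContactVF (n : ℕ) (D : Set (Fin (2*n+1) → ℝ))
    (X : (Fin (2*n+1) → ℝ) → (Fin (2*n+1) → ℝ)) : Prop :=
  ∀ j : Fin (2*n), ∀ x ∈ D,
    dEta0 n (X x) (Xvec n j x) + hDeriv n j (fun y => eta0 n y (X y)) x = 0

/-- The contact vector field with generating function `g`: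
`X_g = g T₀ + Σ_j (-(X_{n+j} g) X_j + (X_j g) X_{n+j})`. -/
def genVF (n : ℕ) (g : (Fin (2*n+1) → ℝ) → ℝ) (x : Fin (2*n+1) → ℝ) :
    Fin (2*n+1) → ℝ :=
  g x • (Pi.single (⟨2*n, by omega⟩ : Fin (2*n+1)) 1 : Fin (2*n+1) → ℝ)
  + ∑ j : Fin n,
      (-(hDeriv n (⟨n + j, by have := j.2; omega⟩ : Fin (2*n)) g x) •
          Xvec n (⟨j, by have := j.2; omega⟩ : Fin (2*n)) x
        + (hDeriv n (⟨j, by have := j.2; omega⟩ : Fin (2*n)) g x) •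
          Xvec n (⟨n + j, by have := j.2; omega⟩ : Fin (2*n)) x)


open scoped ENNReal ContDiff Topology

abbrev VV (n : ℕ) := Fin (2*n+1) → ℝ

lemma Xvec_apply_self (n : ℕ) (j : Fin (2*n)) (x : VV n) :
    Xvec n j x j.castSucc = 1 := by
  have := j.2
  unfold Xvec
  split_ifs with h
  · simp [Pi.single_apply, Fin.ext_iff]; intro hh; omega
  · simp [Pi.single_apply, Fin.ext_iff]

lemma Xvec_flow (n : ℕ) (j : Fin (2*n)) (x : VV n) (r : ℝ) :
    Xvec n j (x + r • Xvec n j x) = Xvec n j x := by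
  have := j.2
  unfold Xvec
  split_ifs with h
  · have h1 : n ≠ 0 := by omega
    have h2 : n + (j:ℕ) ≠ 2 * n := by omega
    simp [Pi.single_apply, Fin.ext_iff, h1, h2]
  · rfl

lemma Xvec_contDiff (n : ℕ) (j : Fin (2*n)) : ContDiff ℝ ∞ (Xvec n j) := by
  unfold Xvec
  split_ifs with h
  · fun_prop
  · fun_prop

lemma Xvec_update (n : ℕ) (j : Fin (2*n)) (x : VV n) (r : ℝ) :
    ∀ i, i ≠ Fin.last (2*n) →
      (x + r • Xvec n j x) i = Function.update x j.castSucc (x j.castSucc + r) i := by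
  intro i hi
  have := j.2
  have hi' : (i:ℕ) ≠ 2*n := by simpa [Fin.ext_iff] using hi
  unfold Xvec
  by_cases hij : i = j.castSucc
  · subst hij
    split_ifs with h
    · have h2 : (j:ℕ) ≠ 2 * n := by omega
      simp [Pi.single_apply, Fin.ext_iff, h2]
    · simp [Pi.single_apply, Fin.ext_iff]
  · have hij' : (i:ℕ) ≠ j := by simpa [Fin.ext_iff] using hij
    rw [Function.update_of_ne hij]
    split_ifs with h
    · simp [Pi.single_apply, Fin.ext_iff, hij', hi']
    · simp [Pi.single_apply, Fin.ext_iff, hij']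

lemma hDeriv_contDiffOn (n : ℕ) (j : Fin (2*n)) {U : Set (VV n)} (hU : IsOpen U) {f : VV n → ℝ}
    (hf : ContDiffOn ℝ ∞ f U) : ContDiffOn ℝ ∞ (hDeriv n j f) U := by
  unfold hDeriv
  exact (hf.fderiv_of_isOpen hU (m := ∞) (by simp)).clm_apply (Xvec_contDiff n j).contDiffOn

lemma XI_contDiffOn (n : ℕ) (I : List (Fin (2*n))) {U : Set (VV n)} (hU : IsOpen U) {f : VV n → ℝ}
    (hf : ContDiffOn ℝ ∞ f U) : ContDiffOn ℝ ∞ (XI n I f) U := by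
  induction I with
  | nil => exact hf
  | cons j I ih => exact hDeriv_contDiffOn n j hU ih

lemma XI_contDiff (n : ℕ) (I : List (Fin (2*n))) {f : VV n → ℝ}
    (hf : ContDiff ℝ ∞ f) : ContDiff ℝ ∞ (XI n I f) :=
  contDiffOn_univ.1 (XI_contDiffOn n I isOpen_univ hf.contDiffOn)

lemma XI_append (n : ℕ) (I J : List (Fin (2*n))) (f : VV n → ℝ) :
    XI n (I ++ J) f = XI n I (XI n J f) := by
  induction I with
  | nil => rfl
  | cons j I ih => simp [XI, ih]

lemma XI_congr (n : ℕ) (I : List (Fin (2*n))) {U : Set (VV n)} (hU : IsOpen U) {f g : VV n → ℝ}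
    (h : Set.EqOn f g U) : Set.EqOn (XI n I f) (XI n I g) U := by
  induction I with
  | nil => exact h
  | cons j I ih =>
    intro x hx
    simp only [XI, hDeriv]
    rw [(ih.eventuallyEq_of_mem (hU.mem_nhds hx)).fderiv_eq]

lemma XI_zero (n : ℕ) (I : List (Fin (2*n))) : XI n I (fun _ : VV n => (0:ℝ)) = fun _ => 0 := by
  induction I with
  | nil => rfl
  | cons j I ih => ext x; simp [XI, hDeriv, ih]

lemma XI_eq_zero (n : ℕ) (I : List (Fin (2*n))) {f : VV n → ℝ} {K : Set (VV n)} (hK : IsClosed K)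
    (h : ∀ x ∉ K, f x = 0) : ∀ x ∉ K, XI n I f x = 0 := by
  intro x hx
  have := XI_congr n I hK.isOpen_compl (f := f) (g := fun _ => 0) (fun y hy => h y hy) hx
  rw [this, XI_zero]

/-- splittings -/
def LL (n : ℕ) : List (Fin (2*n)) → List (List (Fin (2*n)) × List (Fin (2*n)))
  | [] => [([], [])]
  | j :: I => (LL n I).map (fun p => (j :: p.1, p.2)) ++ (LL n I).map (fun p => (p.1, j :: p.2))

lemma LL_length (n : ℕ) (I : List (Fin (2*n))) : ∀ p ∈ LL n I, p.1.length + p.2.length = I.length := by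
  induction I with
  | nil => simp [LL]
  | cons j I ih =>
    intro p hp
    simp only [LL, List.mem_append, List.mem_map] at hp
    rcases hp with ⟨q, hq, rfl⟩ | ⟨q, hq, rfl⟩ <;> have := ih q hq <;> simp <;> omega

lemma hDeriv_list_sum (n : ℕ) (j : Fin (2*n)) {U : Set (VV n)} (hU : IsOpen U) {f g : VV n → ℝ}
    (hf : ContDiffOn ℝ ∞ f U) (hg : ContDiffOn ℝ ∞ g U)
    (L : List (List (Fin (2*n)) × List (Fin (2*n)))) (x : VV n) (hx : x ∈ U) :
    HasFDerivAt (fun y => (L.map (fun p => XI n p.1 f y * XI n p.2 g y)).sum)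
      (fderiv ℝ (fun y => (L.map (fun p => XI n p.1 f y * XI n p.2 g y)).sum) x) x ∧
    hDeriv n j (fun y => (L.map (fun p => XI n p.1 f y * XI n p.2 g y)).sum) x
      = ((L.map (fun p => (j :: p.1, p.2)) ++ L.map (fun p => (p.1, j :: p.2))).map
        (fun p => XI n p.1 f x * XI n p.2 g x)).sum := by
  induction L with
  | nil => 
    constructor
    · apply DifferentiableAt.hasFDerivAt
      simp
    · simp [hDeriv]
  | cons p L ih =>
    obtain ⟨h1, h2⟩ := ih
    have hd : ∀ (I : List (Fin (2*n))) {f : VV n → ℝ}, ContDiffOn ℝ ∞ f U →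
        DifferentiableAt ℝ (XI n I f) x := fun I f hf =>
      ((XI_contDiffOn n I hU hf).contDiffAt (hU.mem_nhds hx)).differentiableAt (by simp)
    have h3 := ((hd p.1 hf).hasFDerivAt.mul (hd p.2 hg).hasFDerivAt).add h1
    simp only [List.map_cons, List.sum_cons, List.map_append, List.sum_append]
    refine ⟨h3.differentiableAt.hasFDerivAt, ?_⟩
    have h4 := h3.fderiv
    simp only [List.map_append, List.sum_append, hDeriv] at h2
    unfold hDeriv
    erw [h4]
    simp only [add_apply, h2, smul_apply, XI, hDeriv, smul_eq_mul]
    ring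

lemma XI_mul (n : ℕ) (I : List (Fin (2*n))) {U : Set (VV n)} (hU : IsOpen U) {f g : VV n → ℝ}
    (hf : ContDiffOn ℝ ∞ f U) (hg : ContDiffOn ℝ ∞ g U) : ∀ x ∈ U,
    XI n I (fun x => f x * g x) x = ((LL n I).map (fun p => XI n p.1 f x * XI n p.2 g x)).sum := by
  induction I with
  | nil => simp [XI, LL]
  | cons j I ih =>
    intro x hx
    have h2 := (hDeriv_list_sum n j hU hf hg (LL n I) x hx).2
    simp only [XI, LL]
    rw [← h2]
    unfold hDeriv
    have : Set.EqOn (XI n I fun x => f x * g x) _ U := ih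
    rw [(this.eventuallyEq_of_mem (hU.mem_nhds hx)).fderiv_eq]

lemma T_eq (n : ℕ) (hn : 1 ≤ n) {h : VV n → ℝ} (hh : ContDiff ℝ ∞ h) (x : VV n) :
    T0Deriv n h x = XI n [⟨n, by omega⟩, ⟨0, by omega⟩] h x - XI n [⟨0, by omega⟩, ⟨n, by omega⟩] h x := by
  have key : ∀ a b : Fin (2*n), XI n [a, b] h x =
      fderiv ℝ (fderiv ℝ h) x (Xvec n a x) (Xvec n b x) + fderiv ℝ h x (fderiv ℝ (Xvec n b) x (Xvec n a x)) := by
    intro a b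
    have h1 : HasFDerivAt (fderiv ℝ h) (fderiv ℝ (fderiv ℝ h) x) x :=
      ((hh.fderiv_right (m := ∞) (by simp)).differentiable (by simp) x).hasFDerivAt
    have h2 : HasFDerivAt (Xvec n b) (fderiv ℝ (Xvec n b) x) x :=
      ((Xvec_contDiff n b).differentiable (by simp) x).hasFDerivAt
    have := (h1.clm_apply h2).fderiv
    simp only [XI]
    unfold hDeriv
    rw [this]
    simp [add_comm]
  rw [key, key]
  have hs : IsSymmSndFDerivAt ℝ h x := hh.contDiffAt.isSymmSndFDerivAt (by simp; exact WithTop.coe_le_coe.2 le_top)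
  rw [hs.eq (Xvec n ⟨n, by omega⟩ x)]
  have hY : Xvec n ⟨n, by omega⟩ = fun _ => Pi.single ⟨n, by omega⟩ 1 := by
    ext1 y; simp [Xvec]
  have hX : HasFDerivAt (Xvec n ⟨0, by omega⟩)
      ((ContinuousLinearMap.proj (R := ℝ) (φ := fun _ : Fin (2*n+1) => ℝ) (⟨n, by omega⟩ : Fin (2*n+1))).smulRight
        (Pi.single (⟨2*n, by omega⟩ : Fin (2*n+1)) 1 : VV n)) x := by
    have : Xvec n ⟨0, by omega⟩ = fun y : VV n => (Pi.single (⟨0, by omega⟩ : Fin (2*n+1)) 1 : VV n) + ((ContinuousLinearMap.proj (R := ℝ) (φ := fun _ : Fin (2*n+1) => ℝ) (⟨n, by omega⟩ : Fin (2*n+1))).smulRight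
        (Pi.single (⟨2*n, by omega⟩ : Fin (2*n+1)) 1 : VV n)) y := by
      ext1 y
      have : 0 < n := hn
      simp [Xvec, this]
    rw [this]
    exact (ContinuousLinearMap.hasFDerivAt _).const_add _
  rw [hX.fderiv, hY]
  simp [T0Deriv]
lemma sq_add_le_ennreal (a b : ℝ≥0∞) : (a + b)^2 ≤ 2 * (a^2 + b^2) := by
  have := ENNReal.rpow_add_le_mul_rpow_add_rpow a b (p := 2) (by norm_num)
  norm_num at this
  exact this

lemma one_dim {φ φ' : ℝ → ℝ} (hφ : ∀ r, HasDerivAt φ (φ' r) r) (hc : Continuous φ') {L : ℝ}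
    (hL : 0 ≤ L) (h0 : φ (-L) = 0) :
    ‖φ 0‖ₑ^2 ≤ ENNReal.ofReal L * ∫⁻ r, ‖φ' r‖ₑ^2 := by
  have h1 : φ 0 = ∫ r in (-L)..0, φ' r := by
    rw [intervalIntegral.integral_eq_sub_of_hasDerivAt (fun r _ => hφ r) (hc.intervalIntegrable _ _), h0, sub_zero]
  rw [intervalIntegral.integral_of_le (by linarith)] at h1
  have h2 : ‖φ 0‖ₑ ≤ ∫⁻ r in Set.Ioc (-L) 0, ‖φ' r‖ₑ := by
    rw [h1]; exact enorm_integral_le_lintegral_enorm _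
  have h3 := ENNReal.lintegral_mul_le_Lp_mul_Lq (volume.restrict (Set.Ioc (-L) 0)) Real.HolderConjugate.two_two
    (f := fun _ => 1) (g := fun r => ‖φ' r‖ₑ) (by fun_prop) (by fun_prop)
  simp only [Pi.mul_apply, one_mul, ENNReal.one_rpow, lintegral_const, Measure.restrict_apply MeasurableSet.univ, Set.univ_inter, Real.volume_Ioc] at h3
  have h4 := h2.trans h3
  calc ‖φ 0‖ₑ^2 ≤ _ := pow_le_pow_left' h4 2
    _ = ENNReal.ofReal L * ∫⁻ r in Set.Ioc (-L) 0, ‖φ' r‖ₑ^2 := by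
      rw [mul_pow, ← ENNReal.rpow_natCast, ← ENNReal.rpow_natCast, ← ENNReal.rpow_mul, ← ENNReal.rpow_mul]
      simp
    _ ≤ _ := mul_le_mul' le_rfl (setLIntegral_le_lintegral _ _)

def Aop {n : ℕ} (W : VV n → VV n) (φ : VV n → ℝ≥0∞) (p : VV n) : ℝ≥0∞ := ∫⁻ r : ℝ, φ (p + r • W p)

lemma flow_bound {n : ℕ} (W : VV n → VV n) (hW : ∀ p (r : ℝ), W (p + r • W p) = W p) (hWc : Continuous W)
    (i : Fin (2*n+1)) (hi : ∀ p, W p i = 1) {F : VV n → ℝ} (hF : ContDiff ℝ ∞ F) {R : ℝ} (hR : 0 ≤ R)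
    (hs : ∀ p ∉ Metric.closedBall (0 : VV n) R, F p = 0) (p : VV n) :
    ‖F p‖ₑ^2 ≤ ENNReal.ofReal (2*R+1) * Aop W (fun q => ‖fderiv ℝ F q (W q)‖ₑ^2) p := by
  by_cases hp : p ∈ Metric.closedBall (0 : VV n) R
  · have h := one_dim (φ := fun r => F (p + r • W p)) (φ' := fun r => fderiv ℝ F (p + r • W p) (W (p + r • W p)))
      (L := 2*R+1) ?_ ?_ (by linarith) ?_
    · simpa [Aop] using h
    · intro r
      have h1 : HasFDerivAt F (fderiv ℝ F (p + r • W p)) (p + r • W p) :=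
        (hF.differentiable (by simp) _).hasFDerivAt
      have h2 : HasDerivAt (fun r : ℝ => p + r • W p) (W p) r := by
        simpa using ((hasDerivAt_id r).smul_const (W p)).const_add p
      rw [hW]
      exact h1.comp_hasDerivAt r h2
    · have : Continuous (fderiv ℝ F) := hF.continuous_fderiv (by simp)
      fun_prop
    · apply hs
      intro hq
      rw [mem_closedBall_zero_iff] at hp hq
      have h1 := (norm_le_pi_norm p i).trans hp
      have h2 := (norm_le_pi_norm _ i).trans hq
      simp only [Pi.add_apply, Pi.smul_apply, hi, smul_eq_mul, Real.norm_eq_abs, mul_one] at h1 h2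
      rw [abs_le] at h1 h2
      linarith
  · simp [hs p hp]

lemma Aop_mono {n : ℕ} (W : VV n → VV n) {φ ψ : VV n → ℝ≥0∞} (h : φ ≤ ψ) : Aop W φ ≤ Aop W ψ :=
  fun _ => lintegral_mono fun _ => h _

lemma Aop_const_mul {n : ℕ} (W : VV n → VV n) (φ : VV n → ℝ≥0∞) (c : ℝ≥0∞) (hc : c ≠ ⊤) :
    Aop W (fun p => c * φ p) = fun p => c * Aop W φ p := by
  ext p; exact lintegral_const_mul' _ _ hc

lemma Aop_measurable {n : ℕ} (W : VV n → VV n) (hW : Continuous W) {φ : VV n → ℝ≥0∞} (h : Measurable φ) :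
    Measurable (Aop W φ) := by
  have : Measurable (fun q : VV n × ℝ => φ (q.1 + q.2 • W q.1)) :=
    h.comp (by fun_prop)
  exact this.lintegral_prod_right'

/-- iterated -/
def AR (n : ℕ) : List (Fin (2*n)) → (VV n → ℝ≥0∞) → (VV n → ℝ≥0∞)
  | [], φ => φ
  | j :: I, φ => AR n I (Aop (Xvec n j) φ)

lemma AR_append (n : ℕ) (I J : List (Fin (2*n))) (φ : VV n → ℝ≥0∞) : AR n (I ++ J) φ = AR n J (AR n I φ) := by
  induction I generalizing φ with
  | nil => rfl
  | cons j I ih => simp [AR, ih]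

lemma AR_mono (n : ℕ) (I : List (Fin (2*n))) {φ ψ : VV n → ℝ≥0∞} (h : φ ≤ ψ) : AR n I φ ≤ AR n I ψ := by
  induction I generalizing φ ψ with
  | nil => exact h
  | cons j I ih => exact ih (Aop_mono _ h)

lemma AR_const_mul (n : ℕ) (I : List (Fin (2*n))) (φ : VV n → ℝ≥0∞) (c : ℝ≥0∞) (hc : c ≠ ⊤) :
    AR n I (fun p => c * φ p) = fun p => c * AR n I φ p := by
  induction I generalizing φ with
  | nil => rfl
  | cons j I ih => simp only [AR]; rw [Aop_const_mul _ _ _ hc, ih]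

lemma AR_measurable (n : ℕ) (I : List (Fin (2*n))) {φ : VV n → ℝ≥0∞} (h : Measurable φ) :
    Measurable (AR n I φ) := by
  induction I generalizing φ with
  | nil => exact h
  | cons j I ih => exact ih (Aop_measurable _ (Xvec_contDiff n j).continuous h)

lemma AR_bound (n : ℕ) (I : List (Fin (2*n))) {F : VV n → ℝ} (hF : ContDiff ℝ ∞ F) {R : ℝ} (hR : 0 ≤ R)
    (hs : ∀ p ∉ Metric.closedBall (0 : VV n) R, F p = 0) (p : VV n) :
    ‖F p‖ₑ^2 ≤ ENNReal.ofReal (2*R+1) ^ I.length * AR n I (fun q => ‖XI n I F q‖ₑ^2) p := by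
  induction I with
  | nil => simp [AR, XI]
  | cons j I ih =>
    refine ih.trans ?_
    have h1 : (fun q => ‖XI n I F q‖ₑ^2) ≤ fun q => ENNReal.ofReal (2*R+1) *
        Aop (Xvec n j) (fun q => ‖XI n (j :: I) F q‖ₑ^2) q := fun q =>
      flow_bound (Xvec n j) (Xvec_flow n j) (Xvec_contDiff n j).continuous _ (Xvec_apply_self n j)
        (XI_contDiff n I hF) hR (XI_eq_zero n I Metric.isClosed_closedBall hs) q
    have h2 := AR_mono n I h1 p
    rw [AR_const_mul n I _ _ ENNReal.ofReal_ne_top] at h2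
    rw [List.length_cons, pow_succ (ENNReal.ofReal _), mul_assoc]
    exact mul_le_mul' le_rfl h2

lemma flow_mp (n : ℕ) (j : Fin (2*n)) (r : ℝ) :
    MeasurePreserving (fun p : VV n => p + r • Xvec n j p) volume volume := by
  have hj := j.2
  by_cases h : (j:ℕ) < n
  · let t : Matrix.TransvectionStruct (Fin (2*n+1)) ℝ :=
      ⟨⟨2*n, by omega⟩, ⟨n + j, by omega⟩, by simp [Fin.ext_iff]; omega, r⟩
    have h1 := Real.volume_preserving_transvectionStruct t
    have h2 := measurePreserving_add_right (volume : Measure (VV n)) (r • (Pi.single (⟨j, by omega⟩ : Fin (2*n+1)) 1 : VV n))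
    have e : (fun p : VV n => p + r • Xvec n j p) =
        (fun x => x + r • (Pi.single (⟨j, by omega⟩ : Fin (2*n+1)) 1 : VV n)) ∘ (Matrix.toLin' t.toMatrix) := by
      refine funext fun p => funext fun i => ?_
      simp [Xvec, h, t, Matrix.TransvectionStruct.toMatrix, Matrix.transvection, Matrix.add_mulVec, Matrix.single_mulVec, Pi.single_apply, Function.update_apply]
      split_ifs <;> ring
    rw [e]
    exact h2.comp h1
  · simp only [Xvec, h, dite_false]
    exact measurePreserving_add_right _ _

lemma Aop_dual (n : ℕ) (j : Fin (2*n)) {φ ψ : VV n → ℝ≥0∞} (hφ : Measurable φ) (hψ : Measurable ψ) :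
    ∫⁻ p, Aop (Xvec n j) ψ p * φ p = ∫⁻ p, ψ p * Aop (Xvec n j) φ p := by
  have hX := (Xvec_contDiff n j).continuous
  have e1 : ∀ p, Aop (Xvec n j) ψ p * φ p = ∫⁻ r : ℝ, ψ (p + r • Xvec n j p) * φ p := by
    intro p
    rw [lintegral_mul_const]; rfl
    exact hψ.comp (by fun_prop)
  have e2 : ∀ p, ψ p * Aop (Xvec n j) φ p = ∫⁻ r : ℝ, ψ p * φ (p + (-r) • Xvec n j p) := by
    intro p
    rw [lintegral_const_mul]
    · congr 1
      unfold Aop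
      rw [← lintegral_neg_eq_self]
    · exact hφ.comp (by fun_prop)
  simp_rw [e1, e2]
  conv_rhs => rw [lintegral_lintegral_swap (by exact ((hψ.comp (by fun_prop)).mul (hφ.comp (by fun_prop))).aemeasurable)]
  rw [lintegral_lintegral_swap]
  · congr 1
    ext r
    rw [← (flow_mp n j r).lintegral_comp (f := fun p => ψ p * φ (p + (-r) • Xvec n j p))]
    · simp only [Xvec_flow]
      congr 1
      ext p
      congr 2
      simp
    · exact hψ.mul (hφ.comp (by fun_prop))
  · apply Measurable.aemeasurable
    exact (hψ.comp (by fun_prop)).mul (hφ.comp (by fun_prop))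

lemma AR_dual (n : ℕ) (J : List (Fin (2*n))) {φ ψ : VV n → ℝ≥0∞} (hφ : Measurable φ) (hψ : Measurable ψ) :
    ∫⁻ p, AR n J ψ p * φ p = ∫⁻ p, ψ p * AR n J.reverse φ p := by
  induction J generalizing ψ with
  | nil => rfl
  | cons j J ih =>
    simp only [AR, List.reverse_cons, AR_append]
    rw [ih (Aop_measurable _ (Xvec_contDiff n j).continuous hψ), Aop_dual n j (AR_measurable n _ hφ) hψ]

lemma Aop_lmarginal (n : ℕ) (j : Fin (2*n)) (S : Finset (Fin (2*n+1))) (hS : Fin.last (2*n) ∈ S)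
    (hj : j.castSucc ∉ S) {φ : VV n → ℝ≥0∞} (hφ : Measurable φ) :
    Aop (Xvec n j) (lmarginal (fun _ => volume) S φ) = lmarginal (fun _ => volume) (insert j.castSucc S) φ := by
  ext p
  rw [lmarginal_insert _ hφ hj]
  unfold Aop
  conv_rhs => rw [← lintegral_add_left_eq_self _ (p j.castSucc)]
  congr 1
  ext r
  apply lmarginal_congr
  intro i hi
  exact Xvec_update n j p r i (fun h => hi (h ▸ hS))

lemma AR_lmarginal (n : ℕ) (M : List (Fin (2*n))) (hM : M.Nodup) (S : Finset (Fin (2*n+1)))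
    (hS : Fin.last (2*n) ∈ S)
    (hj : ∀ j ∈ M, j.castSucc ∉ S) {φ : VV n → ℝ≥0∞} (hφ : Measurable φ) :
    AR n M (lmarginal (fun _ => volume) S φ) =
      lmarginal (fun _ => volume) (S ∪ (M.map Fin.castSucc).toFinset) φ := by
  induction M generalizing S with
  | nil => simp [AR]
  | cons j M ih =>
    simp only [AR]
    rw [Aop_lmarginal n j S hS (hj j (by simp)) hφ, ih (List.nodup_cons.1 hM).2 _ (by simp [hS])]
    · congr 1
      ext i; simp
    · intro k hk
      have : k ≠ j := by rintro rfl; exact (List.nodup_cons.1 hM).1 hk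
      simp [this, hj k (by simp [hk])]

def eT (n : ℕ) : VV n → VV n := fun _ => Pi.single (⟨2*n, by omega⟩ : Fin (2*n+1)) 1

lemma Aop_T (n : ℕ) (φ : VV n → ℝ≥0∞) : Aop (eT n) φ = lmarginal (fun _ => volume) {Fin.last (2*n)} φ := by
  rw [lmarginal_singleton]
  ext p
  unfold Aop
  conv_rhs => rw [← lintegral_add_left_eq_self _ (p (Fin.last (2*n)))]
  congr 1
  ext r
  congr 1
  ext i
  by_cases hi : i = Fin.last (2*n)
  · subst hi; simp [eT, Pi.single_apply, Fin.ext_iff]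
  · have : (i:ℕ) ≠ 2*n := by simpa [Fin.ext_iff] using hi
    simp [eT, Pi.single_apply, Fin.ext_iff, this, hi]

lemma AR_total (n : ℕ) (M : List (Fin (2*n))) (hM : M.Nodup) (hM2 : ∀ j, j ∈ M)
    {φ : VV n → ℝ≥0∞} (hφ : Measurable φ) (p : VV n) :
    AR n M (Aop (eT n) φ) p = ∫⁻ q, φ q := by
  rw [Aop_T, AR_lmarginal n M hM _ (by simp) (by simp [Fin.castSucc_ne_last]) hφ]
  have : ({Fin.last (2*n)} ∪ (M.map Fin.castSucc).toFinset : Finset (Fin (2*n+1))) = Finset.univ := by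
    ext i
    induction i using Fin.lastCases with
    | last => simp
    | cast i => simp [hM2]
  rw [this, lmarginal_univ]
  rfl

lemma bilinear (n : ℕ) (I J : List (Fin (2*n))) (hIJ : (I ++ J.reverse).Nodup) (hIJ2 : ∀ j, j ∈ I ++ J.reverse)
    {R : ℝ} (hR : 0 ≤ R) {u v : VV n → ℝ} (hu : ContDiff ℝ ∞ u) (hv : ContDiff ℝ ∞ v)
    (hus : ∀ p ∉ Metric.closedBall (0 : VV n) R, u p = 0)
    (hvs : ∀ p ∉ Metric.closedBall (0 : VV n) R, v p = 0) :
    ∫⁻ p, ‖u p‖ₑ^2 * ‖v p‖ₑ^2 ≤ ENNReal.ofReal (2*R+1) ^ (I.length + J.length + 1) *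
      ((∫⁻ p, ‖T0Deriv n (XI n I u) p‖ₑ^2) * ∫⁻ p, ‖XI n J v p‖ₑ^2) := by
  set c := ENNReal.ofReal (2*R+1) with hc
  have hct : ∀ k : ℕ, c ^ k ≠ ⊤ := fun k => ENNReal.pow_ne_top ENNReal.ofReal_ne_top
  set φ : VV n → ℝ≥0∞ := fun p => ‖T0Deriv n (XI n I u) p‖ₑ^2
  set ψ : VV n → ℝ≥0∞ := fun p => ‖XI n J v p‖ₑ^2
  have hψ : Measurable ψ := by
    have := (XI_contDiff n J hv).continuous.measurable
    fun_prop
  have hφ : Measurable φ := by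
    have := (XI_contDiff n I hu).continuous_fderiv (by simp)
    have h2 : Continuous (T0Deriv n (XI n I u)) := by unfold T0Deriv; fun_prop
    have := h2.measurable
    fun_prop
  have hTm : Measurable (Aop (eT n) φ) := Aop_measurable _ continuous_const hφ
  have b1 : ∀ p, ‖u p‖ₑ^2 ≤ c^(I.length+1) * AR n I (Aop (eT n) φ) p := by
    intro p
    refine (AR_bound n I hu hR hus p).trans ?_
    have h1 : (fun q => ‖XI n I u q‖ₑ^2) ≤ fun q => c * Aop (eT n) φ q := fun q =>
      flow_bound (eT n) (fun _ _ => rfl) continuous_const ⟨2*n, by omega⟩ (fun _ => by simp [eT])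
        (XI_contDiff n I hu) hR (XI_eq_zero n I Metric.isClosed_closedBall hus) q
    have h2 := AR_mono n I h1 p
    rw [AR_const_mul n I _ _ ENNReal.ofReal_ne_top] at h2
    rw [pow_succ, mul_assoc]
    gcongr
  have b2 : ∀ p, ‖v p‖ₑ^2 ≤ c^J.length * AR n J ψ p := AR_bound n J hv hR hvs
  calc ∫⁻ p, ‖u p‖ₑ^2 * ‖v p‖ₑ^2 ≤ ∫⁻ p, c^(I.length + J.length + 1) * (AR n J ψ p * AR n I (Aop (eT n) φ) p) := by
        apply lintegral_mono
        intro p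
        refine (mul_le_mul' (b1 p) (b2 p)).trans (le_of_eq ?_)
        ring
    _ = c^(I.length + J.length + 1) * ∫⁻ p, ψ p * AR n (I ++ J.reverse) (Aop (eT n) φ) p := by
        rw [lintegral_const_mul' _ _ (hct _), AR_dual n J (AR_measurable n I hTm) hψ]
        simp only [AR_append]
    _ = _ := by
        simp only [AR_total n _ hIJ hIJ2 hφ]
        rw [lintegral_mul_const _ hψ, mul_comm (lintegral _ _)]
def ed (n s : ℕ) (f : VV n → ℝ) (x : VV n) : ℝ≥0∞ :=
  ∑ t ∈ Finset.range (s+1), ∑ I : Fin t → Fin (2*n), ‖XI n (List.ofFn I) f x‖ₑ^2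

lemma le_ed (n s : ℕ) (f : VV n → ℝ) (x : VV n) (I : List (Fin (2*n))) (hI : I.length ≤ s) :
    ‖XI n I f x‖ₑ^2 ≤ ed n s f x := by
  unfold ed
  refine le_trans ?_ (Finset.single_le_sum (f := fun t => ∑ I : Fin t → Fin (2*n), ‖XI n (List.ofFn I) f x‖ₑ^2)
    (fun _ _ => zero_le) (Finset.mem_range.2 (Nat.lt_succ_of_le hI)))
  refine le_trans ?_ (Finset.single_le_sum (f := fun I : Fin _ → Fin (2*n) => ‖XI n (List.ofFn I) f x‖ₑ^2)
    (fun _ _ => zero_le) (Finset.mem_univ I.get))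
  simp

/-- generic upper bound -/
lemma ed_le (n s : ℕ) (f : VV n → ℝ) (x : VV n) (B : List (Fin (2*n)) → ℝ≥0∞)
    (h : ∀ I : List (Fin (2*n)), I.length ≤ s → ‖XI n I f x‖ₑ^2 ≤ B I) :
    ed n s f x ≤ ∑ t ∈ Finset.range (s+1), ∑ I : Fin t → Fin (2*n), B (List.ofFn I) := by
  unfold ed
  refine Finset.sum_le_sum fun t ht => Finset.sum_le_sum fun I _ => h _ ?_
  simpa using Nat.lt_succ_iff.1 (Finset.mem_range.1 ht)

def Good {n : ℕ} (D : Set (VV n)) (h : VV n → ℝ) : Prop :=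
  ∀ x ∈ closure D, ∀ m : ℕ, ∃ h' : VV n → ℝ, ContDiffWithinAt ℝ m h' (closure D) x ∧ h =ᶠ[𝓝[D] x] h'

lemma Good.hDeriv {n : ℕ} {D : Set (VV n)} (hD : IsOpen D) {h : VV n → ℝ} (hh : Good D h) (j : Fin (2*n)) :
    Good D (hDeriv n j h) := by
  intro x hx m
  obtain ⟨h', hc, he⟩ := hh x hx (m+1)
  push_cast at hc
  rw [contDiffWithinAt_succ_iff_hasFDerivWithinAt' (by simp)] at hc
  obtain ⟨u, hu, -, -, f', hf', hcf⟩ := hc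
  rw [Set.insert_eq_of_mem hx] at hu
  refine ⟨fun y => f' y (Xvec n j y), hcf.clm_apply (((Xvec_contDiff n j).of_le (by exact_mod_cast le_top)).contDiffWithinAt), ?_⟩
  have hu' : u ∈ 𝓝[D] x := nhdsWithin_mono x subset_closure hu
  have he' := eventually_eventually_nhdsWithin.2 he
  filter_upwards [hu', he', self_mem_nhdsWithin] with y hyu hye hyD
  have hDy : D ∈ 𝓝 y := hD.mem_nhds hyD
  have h1 : HasFDerivAt h' (f' y) y := (hf' y hyu).hasFDerivAt (Filter.mem_of_superset hDy subset_closure)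
  rw [nhdsWithin_eq_nhds.2 hDy] at hye
  have h2 : h =ᶠ[𝓝 y] h' := hye
  unfold _root_.hDeriv
  rw [h2.fderiv_eq, h1.fderiv]

lemma Good.XI {n : ℕ} {D : Set (VV n)} (hD : IsOpen D) {h : VV n → ℝ} (hh : ContDiffOn ℝ ∞ h (closure D))
    (I : List (Fin (2*n))) : Good D (XI n I h) := by
  induction I with
  | nil => exact fun x hx m => ⟨h, (hh x hx).of_le (by exact_mod_cast le_top), Filter.EventuallyEq.rfl⟩
  | cons j I ih => exact ih.hDeriv hD j

lemma Good.bdd {n : ℕ} {D : Set (VV n)} (hDb : IsBounded D) {h : VV n → ℝ} (hh : Good D h) :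
    ∃ C : ℝ, ∀ x ∈ D, ‖h x‖ ≤ C := by
  have hK : IsCompact (closure D) := hDb.isCompact_closure
  have := hK.induction_on (p := fun s => ∃ C : ℝ, ∀ x ∈ s ∩ D, ‖h x‖ ≤ C) ⟨0, by simp⟩
    (fun s t hst ⟨C, hC⟩ => ⟨C, fun x hx => hC x ⟨hst hx.1, hx.2⟩⟩)
    (fun s t ⟨C, hC⟩ ⟨C', hC'⟩ => ⟨max C C', fun x hx => by
      rcases hx.1 with h | h
      · exact (hC x ⟨h, hx.2⟩).trans (le_max_left _ _)
      · exact (hC' x ⟨h, hx.2⟩).trans (le_max_right _ _)⟩) ?_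
  · obtain ⟨C, hC⟩ := this
    exact ⟨C, fun x hx => hC x ⟨subset_closure hx, hx⟩⟩
  · intro x hx
    obtain ⟨h', hc, he⟩ := hh x hx 0
    have h1 : ∀ᶠ y in 𝓝[closure D] x, ‖h' y‖ < ‖h' x‖ + 1 :=
      hc.continuousWithinAt.norm.eventually_lt_const (by linarith)
    have h2 : ∀ᶠ y in 𝓝[D] x, ‖h y‖ ≤ ‖h' x‖ + 1 := by
      filter_upwards [nhdsWithin_mono x subset_closure h1, he] with y hy hy2
      rw [hy2]; exact le_of_lt hy
    obtain ⟨u, hu, hu2⟩ := mem_nhdsWithin_iff_exists_mem_nhds_inter.1 h2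
    exact ⟨u, mem_nhdsWithin_of_mem_nhds hu, _, fun y hy => hu2 hy⟩

lemma fsNormSq_eq {n : ℕ} (s : ℕ) {D U : Set (VV n)} (hD : IsOpen D) (hDb : IsBounded D) (hU : IsOpen U) (hUD : U ⊆ D)
    {h : VV n → ℝ} (hh : ContDiffOn ℝ ∞ h (closure D)) :
    ENNReal.ofReal (fsNormSq n U s h) = ∫⁻ x in U, ed n s h x := by
  have hc : ∀ I, ContinuousOn (XI n I h) U := fun I =>
    ((XI_contDiffOn n I hD (hh.mono subset_closure)).continuousOn).mono hUD
  have hm : ∀ I, AEStronglyMeasurable (XI n I h) (volume.restrict U) := fun I =>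
    (hc I).aestronglyMeasurable hU.measurableSet
  have hU_fin : volume U ≠ ⊤ := (hDb.subset hUD).measure_lt_top.ne
  have hint : ∀ I, IntegrableOn (fun x => ‖XI n I h x‖^2) U := by
    intro I
    obtain ⟨C, hC⟩ := (Good.XI hD hh I).bdd hDb
    haveI : IsFiniteMeasure (volume.restrict U) := ⟨by simpa using hU_fin.lt_top⟩
    refine Integrable.of_bound ((hm I).norm.pow 2) (C^2) ?_
    filter_upwards [ae_restrict_mem hU.measurableSet] with x hx
    simp only [Pi.pow_apply, norm_pow, norm_norm]
    exact pow_le_pow_left₀ (norm_nonneg _) (hC x (hUD hx)) 2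
  unfold fsNormSq ed
  have hm2 : ∀ I, AEMeasurable (fun x => ‖XI n I h x‖ₑ^2) (volume.restrict U) := fun I =>
    (hm I).enorm.pow_const 2
  rw [lintegral_finsetSum' _ (fun t _ => Finset.aemeasurable_fun_sum _ fun I _ => hm2 _),
    ENNReal.ofReal_sum_of_nonneg (fun t _ => Finset.sum_nonneg fun I _ => integral_nonneg fun x => by positivity)]
  refine Finset.sum_congr rfl fun t _ => ?_
  rw [lintegral_finsetSum' _ (fun I _ => hm2 _),
    ENNReal.ofReal_sum_of_nonneg (fun I _ => integral_nonneg fun x => by positivity)]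
  refine Finset.sum_congr rfl fun I _ => ?_
  rw [ofReal_integral_eq_lintegral_ofReal (hint _) (Filter.Eventually.of_forall fun x => by positivity)]
  refine lintegral_congr fun x => ?_
  rw [ENNReal.ofReal_pow (norm_nonneg _), ofReal_norm]

lemma list_sum_sq {α : Type*} (L : List α) (a : α → ℝ) :
    ‖(L.map a).sum‖ₑ^2 ≤ 2^L.length * (L.map (fun p => ‖a p‖ₑ^2)).sum := by
  induction L with
  | nil => simp
  | cons p L ih =>
    simp only [List.map_cons, List.sum_cons, List.length_cons]
    calc _ ≤ (‖a p‖ₑ + ‖(L.map a).sum‖ₑ)^2 := pow_le_pow_left' (enorm_add_le _ _) 2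
      _ ≤ 2 * (‖a p‖ₑ^2 + ‖(L.map a).sum‖ₑ^2) := sq_add_le_ennreal _ _
      _ ≤ 2 * (2^L.length * ‖a p‖ₑ^2 + 2^L.length * (L.map (fun p => ‖a p‖ₑ^2)).sum) := by
        gcongr
        exact le_mul_of_one_le_left' (one_le_pow₀ (by norm_num))
      _ = _ := by ring

lemma list_sum_le {α : Type*} (L : List α) (a : α → ℝ≥0∞) (M : ℝ≥0∞) (h : ∀ p ∈ L, a p ≤ M) :
    (L.map a).sum ≤ L.length * M := by
  induction L with
  | nil => simp
  | cons p L ih =>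
    simp only [List.map_cons, List.sum_cons, List.length_cons]
    push_cast
    rw [add_mul, add_comm, one_mul]
    exact add_le_add (ih fun q hq => h q (by simp [hq])) (h p (by simp))

lemma lintegral_list_sum {n : ℕ} {α : Type*} (L : List α) (a : α → VV n → ℝ≥0∞) (ha : ∀ p, Measurable (a p)) :
    ∫⁻ x, (L.map (fun p => a p x)).sum = (L.map (fun p => ∫⁻ x, a p x)).sum := by
  induction L with
  | nil => simp
  | cons p L ih =>
    simp only [List.map_cons, List.sum_cons]
    rw [lintegral_add_left (ha p), ih]

/-- Cutoff lemma. -/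
lemma cutoff_bound {n : ℕ} (s : ℕ) {D : Set (VV n)} (hD : IsOpen D)
    {χ : VV n → ℝ} (hχ : ContDiff ℝ ∞ χ) (hχc : HasCompactSupport χ) (hχD : tsupport χ ⊆ D) :
    ∃ C : ℝ≥0∞, C ≠ ⊤ ∧ ∀ f : VV n → ℝ, ContDiffOn ℝ ∞ f D →
      ∫⁻ x, ed n s (fun x => χ x * f x) x ≤ C * ∫⁻ x in D, ed n s f x := by
  have hb : ∀ A, ∃ M : ℝ≥0∞, M ≠ ⊤ ∧ ∀ x, ‖XI n A χ x‖ₑ^2 ≤ M := by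
    intro A
    have hcs : HasCompactSupport (XI n A χ) := by
      refine HasCompactSupport.intro hχc (XI_eq_zero n A (isClosed_tsupport χ) fun x hx => image_eq_zero_of_notMem_tsupport hx)
    obtain ⟨M, hM⟩ := (XI_contDiff n A hχ).continuous.bounded_above_of_compact_support hcs
    refine ⟨ENNReal.ofReal M ^ 2, ENNReal.pow_ne_top ENNReal.ofReal_ne_top, fun x => ?_⟩
    refine pow_le_pow_left' ?_ 2
    rw [← ofReal_norm]
    exact ENNReal.ofReal_le_ofReal (hM x)
  choose M hMt hM using hb
  set c : List (Fin (2*n)) → ℝ≥0∞ := fun I => 2^(LL n I).length * ((LL n I).map (fun p => M p.1)).sum with hc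
  have hlt : ∀ L : List (List (Fin (2*n)) × List (Fin (2*n))), (L.map (fun p => M p.1)).sum ≠ ⊤ := by
    intro L
    induction L with
    | nil => simp
    | cons p L ih => simp only [List.map_cons, List.sum_cons]; exact ENNReal.add_ne_top.2 ⟨hMt _, ih⟩
  refine ⟨∑ t ∈ Finset.range (s+1), ∑ I : Fin t → Fin (2*n), c (List.ofFn I), ?_, ?_⟩
  · refine ENNReal.sum_ne_top.2 fun t _ => ENNReal.sum_ne_top.2 fun I _ => ?_
    exact ENNReal.mul_ne_top (ENNReal.pow_ne_top (by norm_num)) (hlt _)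
  · intro f hf
    have key : ∀ x ∈ D, ed n s (fun x => χ x * f x) x ≤
        (∑ t ∈ Finset.range (s+1), ∑ I : Fin t → Fin (2*n), c (List.ofFn I)) * ed n s f x := by
      intro x hx
      refine (ed_le n s _ x (fun I => c I * ed n s f x) ?_).trans (le_of_eq ?_)
      · intro I hI
        rw [XI_mul n I hD hχ.contDiffOn hf x hx]
        refine (list_sum_sq _ _).trans ?_
        simp only [hc, mul_assoc]
        gcongr
        have hlen := LL_length n I
        revert hlen
        generalize LL n I = L
        intro hlen
        induction L with
        | nil => simp
        | cons p L ih =>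
          simp only [List.map_cons, List.sum_cons, add_mul]
          refine add_le_add ?_ (ih fun q hq => hlen q (by simp [hq]))
          rw [enorm_mul, mul_pow]
          have := hlen p (by simp)
          exact mul_le_mul' (hM _ x) (le_ed n s f x _ (by omega))
      · simp only [Finset.sum_mul]
    rw [← lintegral_const_mul' _ _ (by
      refine ENNReal.sum_ne_top.2 fun t _ => ENNReal.sum_ne_top.2 fun I _ => ?_
      exact ENNReal.mul_ne_top (ENNReal.pow_ne_top (by norm_num)) (hlt _))]
    rw [← setLIntegral_eq_of_support_subset (s := D)]
    · exact setLIntegral_mono' hD.measurableSet key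
    · intro x hx
      by_contra hxD
      apply hx
      unfold ed
      refine Finset.sum_eq_zero fun t _ => Finset.sum_eq_zero fun I _ => ?_
      rw [XI_eq_zero n _ (isClosed_tsupport χ) (fun y hy => by simp [image_eq_zero_of_notMem_tsupport hy]) x
        (fun h => hxD (hχD h))]
      simp

lemma sq_sub_bound (a b : ℝ) (e : ℝ≥0∞) (ha : ‖a‖ₑ^2 ≤ e) (hb : ‖b‖ₑ^2 ≤ e) : ‖a - b‖ₑ^2 ≤ 4 * e := by
  calc ‖a - b‖ₑ^2 ≤ (‖a‖ₑ + ‖b‖ₑ)^2 := pow_le_pow_left' enorm_sub_le 2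
    _ ≤ 2 * (‖a‖ₑ^2 + ‖b‖ₑ^2) := sq_add_le_ennreal _ _
    _ ≤ 2 * (e + e) := mul_le_mul' le_rfl (add_le_add ha hb)
    _ = 4 * e := by ring

lemma T_bound (n : ℕ) (hn : 1 ≤ n) (I : List (Fin (2*n))) (s : ℕ) (hI : I.length + 2 ≤ s) {F : VV n → ℝ}
    (hF : ContDiff ℝ ∞ F) (p : VV n) : ‖T0Deriv n (XI n I F) p‖ₑ^2 ≤ 4 * ed n s F p := by
  rw [T_eq n hn (XI_contDiff n I hF)]
  have h : ∀ a b : Fin (2*n), ‖XI n [a, b] (XI n I F) p‖ₑ^2 ≤ ed n s F p := by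
    intro a b
    rw [← XI_append]
    refine le_ed n s F p _ ?_
    rw [List.length_append]
    simp only [List.length_cons, List.length_nil]
    omega
  exact sq_sub_bound _ _ _ (h _ _) (h _ _)

lemma half_bound (n : ℕ) (hn : 1 ≤ n) (A B : List (Fin (2*n))) (s k m : ℕ) (hm : m ≤ 2*n)
    (hB : B.length + m ≤ k) (hA : 2*n+2+A.length ≤ s + m) {R : ℝ} (hR : 0 ≤ R) {F G : VV n → ℝ}
    (hF : ContDiff ℝ ∞ F) (hG : ContDiff ℝ ∞ G)
    (hFs : ∀ p ∉ Metric.closedBall (0 : VV n) R, F p = 0)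
    (hGs : ∀ p ∉ Metric.closedBall (0 : VV n) R, G p = 0) :
    ∫⁻ p, ‖XI n A F p‖ₑ^2 * ‖XI n B G p‖ₑ^2 ≤ (ENNReal.ofReal (2*R+1) ^ (2*n+1) * 4) *
      ((∫⁻ p, ed n s F p) * ∫⁻ p, ed n k G p) := by
  set I := (List.finRange (2*n)).drop m with hI
  set J := (List.finRange (2*n)).take m with hJ
  have hp : (I ++ J.reverse).Perm (List.finRange (2*n)) := by
    refine List.perm_append_comm.trans (((List.reverse_perm J).append_right I).trans ?_)
    rw [List.take_append_drop]
  have hIl : I.length = 2*n - m := by simp [hI]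
  have hJl : J.length = m := by simp [hJ, hm]
  have h := bilinear n I J (hp.nodup_iff.2 (List.nodup_finRange _)) (fun j => hp.mem_iff.2 (List.mem_finRange j)) hR
    (XI_contDiff n A hF) (XI_contDiff n B hG) (XI_eq_zero n A Metric.isClosed_closedBall hFs)
    (XI_eq_zero n B Metric.isClosed_closedBall hGs)
  have hl : I.length + J.length + 1 = 2*n+1 := by omega
  rw [hl] at h
  refine h.trans ?_
  rw [mul_assoc, ← mul_assoc 4]
  gcongr
  · rw [← lintegral_const_mul' _ _ (by norm_num)]
    refine lintegral_mono fun p => ?_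
    dsimp only
    rw [← XI_append]
    exact T_bound n hn _ s (by rw [List.length_append]; omega) hF p
  · rw [← XI_append]
    exact le_ed _ _ _ _ _ (by simp only [List.length_append]; omega)

lemma pair_bound (n : ℕ) (hn : 1 ≤ n) (A B : List (Fin (2*n))) (s k : ℕ) (hs : 2*n+3 ≤ s) (hk : k ≤ s)
    (hAB : A.length + B.length ≤ k) {R : ℝ} (hR : 0 ≤ R) {F G : VV n → ℝ}
    (hF : ContDiff ℝ ∞ F) (hG : ContDiff ℝ ∞ G)
    (hFs : ∀ p ∉ Metric.closedBall (0 : VV n) R, F p = 0)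
    (hGs : ∀ p ∉ Metric.closedBall (0 : VV n) R, G p = 0) :
    ∫⁻ p, ‖XI n A F p‖ₑ^2 * ‖XI n B G p‖ₑ^2 ≤ (ENNReal.ofReal (2*R+1) ^ (2*n+1) * 4) *
      ((∫⁻ p, ed n s F p) * ∫⁻ p, ed n k G p) := by
  by_cases h : k - B.length ≤ s - A.length
  · exact half_bound n hn A B s k (min (k - B.length) (2*n)) (by omega) (by omega) (by omega) hR hF hG hFs hGs
  · rw [mul_comm (lintegral _ _)]
    simp_rw [mul_comm (‖XI n A F _‖ₑ^2)]
    exact half_bound n hn B A k s (min (s - A.length) (2*n)) (by omega) (by omega) (by omega) hR hG hF hGs hFs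

lemma prod_bound (n : ℕ) (hn : 1 ≤ n) (s k : ℕ) (hs : 2*n+3 ≤ s) (hk : k ≤ s) {R : ℝ} (hR : 0 ≤ R) :
    ∃ C : ℝ≥0∞, C ≠ ⊤ ∧ ∀ F G : VV n → ℝ, ContDiff ℝ ∞ F → ContDiff ℝ ∞ G →
    (∀ p ∉ Metric.closedBall (0 : VV n) R, F p = 0) →
    (∀ p ∉ Metric.closedBall (0 : VV n) R, G p = 0) →
    ∫⁻ p, ed n k (fun x => F x * G x) p ≤ C * ((∫⁻ p, ed n s F p) * ∫⁻ p, ed n k G p) := by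
  set c0 := ENNReal.ofReal (2*R+1) ^ (2*n+1) * 4 with hc0
  have hc0t : c0 ≠ ⊤ := ENNReal.mul_ne_top (ENNReal.pow_ne_top ENNReal.ofReal_ne_top) (by norm_num)
  refine ⟨∑ t ∈ Finset.range (k+1), ∑ I : Fin t → Fin (2*n),
    2^(LL n (List.ofFn I)).length * ((LL n (List.ofFn I)).length * c0), ?_, ?_⟩
  · refine ENNReal.sum_ne_top.2 fun t _ => ENNReal.sum_ne_top.2 fun I _ => ?_
    exact ENNReal.mul_ne_top (ENNReal.pow_ne_top (by norm_num)) (ENNReal.mul_ne_top (by simp) hc0t)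
  · intro F G hF hG hFs hGs
    have hmF : ∀ I, Measurable (XI n I F) := fun I => (XI_contDiff n I hF).continuous.measurable
    have hmG : ∀ I, Measurable (XI n I G) := fun I => (XI_contDiff n I hG).continuous.measurable
    have hm : ∀ I, Measurable (XI n I (fun x => F x * G x)) := fun I =>
      (XI_contDiff n I (hF.mul hG)).continuous.measurable
    unfold ed
    rw [lintegral_finsetSum _ (fun t _ => Finset.measurable_fun_sum _ fun I _ => (hm _).enorm.pow_const 2), Finset.sum_mul]
    refine Finset.sum_le_sum fun t ht => ?_
    rw [lintegral_finsetSum _ (fun I _ => (hm _).enorm.pow_const 2), Finset.sum_mul]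
    refine Finset.sum_le_sum fun I _ => ?_
    have hIl : (List.ofFn I).length ≤ k := by simpa using Nat.lt_succ_iff.1 (Finset.mem_range.1 ht)
    generalize List.ofFn I = I' at hIl
    calc ∫⁻ x, ‖XI n I' (fun x => F x * G x) x‖ₑ^2
        ≤ ∫⁻ x, 2^(LL n I').length * ((LL n I').map (fun p => ‖XI n p.1 F x‖ₑ^2 * ‖XI n p.2 G x‖ₑ^2)).sum := by
          refine lintegral_mono fun x => ?_
          dsimp only
          rw [XI_mul n I' isOpen_univ hF.contDiffOn hG.contDiffOn x trivial]
          refine (list_sum_sq _ _).trans ?_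
          simp only [enorm_mul, mul_pow]
          exact le_rfl
      _ = 2^(LL n I').length * ((LL n I').map (fun p => ∫⁻ x, ‖XI n p.1 F x‖ₑ^2 * ‖XI n p.2 G x‖ₑ^2)).sum := by
          rw [lintegral_const_mul' _ _ (ENNReal.pow_ne_top (by norm_num)),
            lintegral_list_sum (LL n I') (fun p x => ‖XI n p.1 F x‖ₑ^2 * ‖XI n p.2 G x‖ₑ^2)
              (fun p => ((hmF _).enorm.pow_const 2).mul ((hmG _).enorm.pow_const 2))]
      _ ≤ _ := by
          rw [mul_assoc, mul_assoc]
          refine mul_le_mul' le_rfl ?_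
          refine list_sum_le _ _ _ fun p hp => ?_
          have := LL_length n I' p hp
          exact pair_bound n hn p.1 p.2 s k hs hk (by omega) hR hF hG hFs hGs

lemma exists_cutoff {n : ℕ} {D D' : Set (VV n)} (hD : IsOpen D) (hDb : IsBounded D) (hsub : closure D' ⊆ D) :
    ∃ χ : VV n → ℝ, ContDiff ℝ ∞ χ ∧ HasCompactSupport χ ∧ tsupport χ ⊆ D ∧ ∀ x ∈ D', χ x = 1 := by
  obtain ⟨u, hu, hDu, huD⟩ := normal_exists_closure_subset (isClosed_closure (s := D')) hD hsub
  obtain ⟨χ, h0, h1, -⟩ := exists_contMDiffMap_zero_one_of_isClosed (n := ⊤) (modelWithCornersSelf ℝ (VV n))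
    hu.isClosed_compl (isClosed_closure (s := D')) (Set.disjoint_compl_left_iff_subset.2 hDu)
  have hsup : tsupport χ ⊆ closure u := by
    refine closure_mono fun x hx => ?_
    by_contra hxu
    exact hx (h0 hxu)
  refine ⟨χ, χ.contMDiff.contDiff, ?_, hsup.trans huD, fun x hx => h1 (subset_closure hx)⟩
  exact (hDb.isCompact_closure).of_isClosed_subset (isClosed_tsupport _) ((hsup.trans huD).trans subset_closure)

lemma cutoff_smooth {n : ℕ} {D : Set (VV n)} (hD : IsOpen D) {χ f : VV n → ℝ} (hχ : ContDiff ℝ ∞ χ)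
    (hχD : tsupport χ ⊆ D) (hf : ContDiffOn ℝ ∞ f D) : ContDiff ℝ ∞ (fun x => χ x * f x) := by
  rw [contDiff_iff_contDiffAt]
  intro x
  by_cases hx : x ∈ tsupport χ
  · exact hχ.contDiffAt.mul (hf.contDiffAt (hD.mem_nhds (hχD hx)))
  · refine (contDiffAt_const (c := (0:ℝ))).congr_of_eventuallyEq ?_
    filter_upwards [(isClosed_tsupport χ).isOpen_compl.mem_nhds hx] with y hy
    simp [image_eq_zero_of_notMem_tsupport hy]

/-- `‖f·g‖_{D',k} ≤ C ‖f‖_{D,s} ‖g‖_{D,k}` for `s ≥ 2n+3`, `k ≤ s`. -/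
theorem statement3 (n s k : ℕ) (hn : 1 ≤ n) (hs : 2*n+3 ≤ s) (hk : k ≤ s)
    (D D' : Set (Fin (2*n+1) → ℝ)) (hD : IsOpen D) (hDb : IsBounded D)
    (hD' : IsOpen D') (hD'b : IsBounded D') (hsub : closure D' ⊆ D) :
    ∃ C > (0:ℝ), ∀ f g : (Fin (2*n+1) → ℝ) → ℝ,
      ContDiffOn ℝ (⊤:ℕ∞) f (closure D) → ContDiffOn ℝ (⊤:ℕ∞) g (closure D) →
      fsNorm n D' k (fun x => f x * g x) ≤ C * fsNorm n D s f * fsNorm n D k g := by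
  obtain ⟨χ, hχ, hχc, hχD, hχ1⟩ := exists_cutoff hD hDb hsub
  obtain ⟨R, hR0, hR⟩ : ∃ R : ℝ, 0 ≤ R ∧ ∀ p ∉ Metric.closedBall (0 : VV n) R, χ p = 0 := by
    obtain ⟨R, hR⟩ := hχc.isBounded.subset_closedBall (0 : VV n)
    refine ⟨max R 0, le_max_right _ _, fun p hp => image_eq_zero_of_notMem_tsupport fun h => hp ?_⟩
    exact Metric.closedBall_subset_closedBall (le_max_left _ _) (hR h)
  obtain ⟨C0, hC0, h0⟩ := prod_bound n hn s k hs hk hR0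
  obtain ⟨C1, hC1, h1⟩ := cutoff_bound s hD hχ hχc hχD
  obtain ⟨C2, hC2, h2⟩ := cutoff_bound k hD hχ hχc hχD
  set K := C0 * (C1 * C2) with hK
  have hKt : K ≠ ⊤ := ENNReal.mul_ne_top hC0 (ENNReal.mul_ne_top hC1 hC2)
  refine ⟨Real.sqrt (K.toReal + 1), Real.sqrt_pos.2 (by positivity), ?_⟩
  intro f g hf hg
  have hD'D : D' ⊆ D := subset_closure.trans hsub
  have hfD := hf.mono (subset_closure (s := D))
  have hgD := hg.mono (subset_closure (s := D))
  have nn : ∀ (U : Set (VV n)) (s : ℕ) (f : VV n → ℝ), 0 ≤ fsNormSq n U s f := fun U s f =>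
    Finset.sum_nonneg fun t _ => Finset.sum_nonneg fun I _ => integral_nonneg fun x => by positivity
  have main : ENNReal.ofReal (fsNormSq n D' k (fun x => f x * g x)) ≤
      K * (ENNReal.ofReal (fsNormSq n D s f) * ENNReal.ofReal (fsNormSq n D k g)) := by
    rw [fsNormSq_eq k hD hDb hD' hD'D (hf.mul hg), fsNormSq_eq s hD hDb hD le_rfl hf,
      fsNormSq_eq k hD hDb hD le_rfl hg]
    calc ∫⁻ x in D', ed n k (fun x => f x * g x) x
        = ∫⁻ x in D', ed n k (fun x => (χ x * f x) * (χ x * g x)) x := by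
          refine setLIntegral_congr_fun hD'.measurableSet fun x hx => ?_
          unfold ed
          refine Finset.sum_congr rfl fun t _ => Finset.sum_congr rfl fun I _ => ?_
          rw [XI_congr n (List.ofFn I) hD' (f := fun x => f x * g x)
            (g := fun x => (χ x * f x) * (χ x * g x)) (fun y hy => by simp [hχ1 y hy]) hx]
      _ ≤ ∫⁻ x, ed n k (fun x => (χ x * f x) * (χ x * g x)) x := setLIntegral_le_lintegral _ _
      _ ≤ C0 * ((∫⁻ x, ed n s (fun x => χ x * f x) x) * ∫⁻ x, ed n k (fun x => χ x * g x) x) :=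
          h0 _ _ (cutoff_smooth hD hχ hχD hfD) (cutoff_smooth hD hχ hχD hgD)
            (fun p hp => by simp [hR p hp]) (fun p hp => by simp [hR p hp])
      _ ≤ C0 * ((C1 * ∫⁻ x in D, ed n s f x) * (C2 * ∫⁻ x in D, ed n k g x)) :=
          mul_le_mul' le_rfl (mul_le_mul' (h1 f hfD) (h2 g hgD))
      _ = _ := by rw [hK]; ring
  have main2 : fsNormSq n D' k (fun x => f x * g x) ≤ (K.toReal + 1) * fsNormSq n D s f * fsNormSq n D k g := by
    rw [← ENNReal.ofReal_toReal hKt, ← ENNReal.ofReal_mul (nn _ _ _), ← ENNReal.ofReal_mul ENNReal.toReal_nonneg,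
      ENNReal.ofReal_le_ofReal_iff (by have := nn D s f; have := nn D k g; positivity)] at main
    have := mul_nonneg (nn D s f) (nn D k g)
    nlinarith
  unfold fsNorm
  rw [← Real.sqrt_mul (by positivity), ← Real.sqrt_mul (mul_nonneg (by positivity) (nn _ _ _))]
  exact Real.sqrt_le_sqrt main2

end
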